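/- Let 𝒯 be a finite set of types, τ : 𝒮 → 𝒯, and for each t ∈ 𝒯 let r_t, p_t be nonnegative integers with r_t ≤ p_t. A set S ⊆ 𝒮 satisfies the bounds if r_t ≤ |{s ∈ S : τ(s) = t}| ≤ p_t for every t ∈ 𝒯. Define the dichotomous distributional preference by: S ≿ S' iff S satisfies the bounds or S' does not satisfy the bounds. Then ≿ satisfies the upper-bound property and the maximizer property. -/

import Mathlib

open Finset

variable {α : Type*}

/-- Strict part of a distributional preference. -/
def strictPref (pref : Finset α → Finset α → Prop) (A B : Finset α) : Prop :=
  pref A B ∧ ¬ pref B A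

/-- Indifference part of a distributional preference. -/
def indiffPref (pref : Finset α → Finset α → Prop) (A B : Finset α) : Prop :=
  pref A B ∧ pref B A

/-- Incomparability under a distributional preference. -/
def incomparable (pref : Finset α → Finset α → Prop) (A B : Finset α) : Prop :=
  ¬ pref A B ∧ ¬ pref B A

/-- `NW q S` is the collection of non-wasteful subsets of `S`. -/
def NW (q : ℕ) (S : Finset α) : Set (Finset α) :=
  {T | T ⊆ S ∧ T.card = min q S.card}

/-- The frontier of `S`: non-wasteful subsets undominated w.r.t. the preference. -/
def frontierSet (pref : Finset α → Finset α → Prop) (q : ℕ) (S : Finset α) :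
    Set (Finset α) :=
  {T | T ∈ NW q S ∧ ∀ T' ∈ NW q S, ¬ strictPref pref T' T}

/-- The upper-bound property of a distributional preference. -/
def upperBoundProperty [DecidableEq α] (pref : Finset α → Finset α → Prop) (q : ℕ) : Prop :=
  ∀ S S' : Finset α, S.card = q → S'.card = q → incomparable pref S S' →
    ∃ S'' ∈ NW q (S ∪ S'), strictPref pref S'' S ∨ strictPref pref S'' S'

/-- The maximizer property of a distributional preference. -/
def maximizerProperty [DecidableEq α] (pref : Finset α → Finset α → Prop) (q : ℕ) : Prop :=
  ∀ S S' : Finset α, S ≠ S' → S.card = q → S'.card = q →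
    (∀ S'' ∈ NW q (S ∪ S'), pref S S'' ∧ pref S' S'') →
    ∃ s ∈ S \ S', ∃ s' ∈ S' \ S,
      indiffPref pref (S.erase s ∪ {s'}) S ∧ indiffPref pref (S'.erase s' ∪ {s}) S'

/-- The improvement property of a distributional preference. -/
def improvementProperty [DecidableEq α] (pref : Finset α → Finset α → Prop) (q : ℕ) : Prop :=
  ∀ S S' : Finset α, S.card = q → S'.card = q → ∀ s ∈ S \ S',
    (∀ S'' ∈ NW q (S ∪ S'), s ∉ S'' → strictPref pref S S'') →
    (∀ S'' ∈ NW q (S ∪ S'), s ∈ S'' → pref S S'') →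
    ∃ s' ∈ S' \ S, strictPref pref (S'.erase s' ∪ {s}) S'

/-- A choice rule is non-wasteful. -/
def nonWasteful (q : ℕ) (Ch : Finset α → Finset α) : Prop :=
  ∀ S : Finset α, (Ch S).card = min q S.card

/-- A choice rule promotes the distributional preference. -/
def promotesPref (pref : Finset α → Finset α → Prop) (Ch : Finset α → Finset α) : Prop :=
  ∀ S : Finset α, ∀ S' ⊆ S, S'.card = (Ch S).card → ¬ strictPref pref S' (Ch S)

/-- A choice rule guarantees no justified envy with respect to priority ranking `π`. -/
def noJustifiedEnvy [DecidableEq α] (pref : Finset α → Finset α → Prop)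
    (π : α → α → Prop) (Ch : Finset α → Finset α) : Prop :=
  ∀ S : Finset α, ∀ s ∈ Ch S, ∀ s' ∈ S \ Ch S,
    pref ((Ch S).erase s ∪ {s'}) (Ch S) → π s s'

/-- Path independence of a choice rule. -/
def pathIndependent [DecidableEq α] (Ch : Finset α → Finset α) : Prop :=
  ∀ S S' : Finset α, Ch (S ∪ S') = Ch (Ch S ∪ S')

/-- Consistency of a choice rule. -/
def consistentRule [DecidableEq α] (Ch : Finset α → Finset α) : Prop :=
  ∀ S : Finset α, ∀ s ∈ S, s ∉ Ch S → Ch (S.erase s) = Ch S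

/-- Substitutability of a choice rule. -/
def substitutableRule [DecidableEq α] (Ch : Finset α → Finset α) : Prop :=
  ∀ S : Finset α, ∀ s ∈ S, ∀ s' ∈ S, s ≠ s' → s ∈ Ch S → s ∈ Ch (S.erase s')

/-- `l` lists the elements of `A` in strictly decreasing `π`-priority. -/
def descList [DecidableEq α] (π : α → α → Prop) (A : Finset α) (l : List α) : Prop :=
  l.Pairwise π ∧ l.Nodup ∧ l.toFinset = A

/-- `A` priority dominates `B` with respect to `π`. -/
def priorityDominates [DecidableEq α] (π : α → α → Prop) (A B : Finset α) : Prop :=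
  B.card ≤ A.card ∧
  ∀ la lb : List α, descList π A la → descList π B lb →
    ∀ (k : ℕ) (ha : k < la.length) (hb : k < lb.length),
      la.get ⟨k, ha⟩ = lb.get ⟨k, hb⟩ ∨ π (la.get ⟨k, ha⟩) (lb.get ⟨k, hb⟩)

/-- The revealed preference axiom for a choice rule: no revealed-priority cycles. -/
def revealedPrefAxiom [DecidableEq α] (pref : Finset α → Finset α → Prop)
    (Ch : Finset α → Finset α) : Prop :=
  ¬ ∃ (K : ℕ) (s : ℕ → α) (T : ℕ → Finset α), 0 < K ∧ s K = s 0 ∧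
    ∀ k < K, s k ∈ Ch (T k) ∧ s (k + 1) ∈ T k \ Ch (T k) ∧
      pref ((Ch (T k)).erase (s k) ∪ {s (k + 1)}) (Ch (T k))

/-- `S` satisfies the floors `r` and ceilings `p` for the type map `τ`. -/
def satisfiesBounds {α β : Type*} [DecidableEq β] (τ : α → β) (r p : β → ℕ)
    (S : Finset α) : Prop :=
  ∀ t : β, r t ≤ (S.filter fun s => τ s = t).card ∧
    (S.filter fun s => τ s = t).card ≤ p t

/-- The dichotomous distributional preference: `A ≿ B` iff `A` satisfies the
bounds or `B` does not. -/
def dichotomousPref {α β : Type*} [DecidableEq β] (τ : α → β) (r p : β → ℕ)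
    (A B : Finset α) : Prop :=
  satisfiesBounds τ r p A ∨ ¬ satisfiesBounds τ r p B

/-!
The preference is complete, so no two sets are incomparable and the upper-bound property is vacuous.

For the maximizer property, distinct `S` and `S'` of equal size admit an exchange `s ↔ s'` after
which, type by type, both counts lie between those of `S` and `S'`: take `s ∈ S \ S'` and
`s' ∈ S' \ S` of equal type if possible, and arbitrary ones otherwise. Bounds met by both `S` and
`S'` therefore survive the exchange. Since `S` and `S'` are both maximal, either both meet the
bounds or no set of size `q` in their union does, and the exchanged sets are indifferent to the
original ones in either case.
-/

section Exchange

variable [DecidableEq α] {S S' : Finset α} {s s' : α}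

lemma sdiff_nonempty_of_card_le_of_ne (hcard : S'.card ≤ S.card) (hne : S ≠ S') :
    (S \ S').Nonempty :=
  sdiff_nonempty.2 fun hsub => hne (eq_of_subset_of_card_le hsub hcard)

lemma sum_exchange_add {M : Type*} [AddCommMonoid M] (f : α → M) (hs : s ∈ S) (hs' : s' ∉ S) :
    ∑ x ∈ S.erase s ∪ {s'}, f x + f s = ∑ x ∈ S, f x + f s' := by
  have hdisj : Disjoint (S.erase s) {s'} :=
    disjoint_singleton_right.2 fun h => hs' (mem_of_mem_erase h)
  rw [sum_union hdisj, sum_singleton, add_right_comm, sum_erase_add S f hs]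

lemma card_exchange (hs : s ∈ S) (hs' : s' ∉ S) : (S.erase s ∪ {s'}).card = S.card := by
  simp only [card_eq_sum_ones]
  exact Nat.add_right_cancel (sum_exchange_add (fun _ => 1) hs hs')

lemma exchange_subset_union (hs' : s' ∈ S') : S.erase s ∪ {s'} ⊆ S ∪ S' :=
  union_subset_union (erase_subset s S) (singleton_subset_iff.2 hs')

end Exchange

section TypeCount

variable {β : Type*} [DecidableEq β] {τ : α → β} {S S' : Finset α} {s s' : α}

/-- The distribution of a set of students: the number of its members of each type. Distributions are
ordered componentwise, so `Set.uIcc` gives those lying between two given ones type by type. -/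
def typeCount (τ : α → β) (S : Finset α) (t : β) : ℕ :=
  (S.filter fun s => τ s = t).card

lemma satisfiesBounds_iff_typeCount_mem_Icc {r p : β → ℕ} :
    satisfiesBounds τ r p S ↔ typeCount τ S ∈ Set.Icc r p :=
  forall_and

lemma typeCount_eq_sum_single (τ : α → β) (S : Finset α) :
    typeCount τ S = ∑ s ∈ S, Pi.single (τ s) 1 := by
  ext t
  simp only [typeCount, card_filter, Finset.sum_apply, Pi.single_apply, eq_comm]

variable [DecidableEq α]

lemma typeCount_lt_typeCount (hs : s ∈ S) (hs' : s ∉ S') (h : ∀ x ∈ S' \ S, τ x ≠ τ s) :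
    typeCount τ S' (τ s) < typeCount τ S (τ s) := by
  refine card_lt_card (ssubset_iff_of_subset ?_ |>.2 ⟨s, ?_, ?_⟩)
  · intro x hx
    rw [mem_filter] at hx ⊢
    exact ⟨by_contra fun hxS => h x (mem_sdiff.2 ⟨hx.1, hxS⟩) hx.2, hx.2⟩
  · exact mem_filter.2 ⟨hs, rfl⟩
  · exact fun hmem => hs' (mem_filter.1 hmem).1

lemma typeCount_exchange_add_single (τ : α → β) (hs : s ∈ S) (hs' : s' ∉ S) :
    typeCount τ (S.erase s ∪ {s'}) + Pi.single (τ s) 1 =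
      typeCount τ S + Pi.single (τ s') 1 := by
  simp only [typeCount_eq_sum_single]
  exact sum_exchange_add (fun x => Pi.single (τ x) 1) hs hs'

lemma typeCount_exchange_of_eq (hs : s ∈ S) (hs' : s' ∉ S) (hτ : τ s = τ s') :
    typeCount τ (S.erase s ∪ {s'}) = typeCount τ S :=
  add_right_cancel (hτ ▸ typeCount_exchange_add_single τ hs hs')

lemma typeCount_exchange_mem_uIcc_of_lt (hs : s ∈ S) (hs' : s' ∉ S)
    (hlt : typeCount τ S' (τ s) < typeCount τ S (τ s))
    (hlt' : typeCount τ S (τ s') < typeCount τ S' (τ s')) :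
    typeCount τ (S.erase s ∪ {s'}) ∈ Set.uIcc (typeCount τ S) (typeCount τ S') := by
  rw [← Set.pi_univ_uIcc]
  intro t _
  have hcount := congrFun (typeCount_exchange_add_single τ hs hs') t
  simp only [Pi.add_apply, Pi.single_apply] at hcount
  rw [Set.mem_uIcc]
  -- Only the counts at `τ s` and `τ s'` change, each by one unit towards the count in `S'`.
  grind

lemma exists_exchange_typeCount_mem_uIcc (τ : α → β) (hne : S ≠ S') (hcard : S.card = S'.card) :
    ∃ s ∈ S \ S', ∃ s' ∈ S' \ S,
      typeCount τ (S.erase s ∪ {s'}) ∈ Set.uIcc (typeCount τ S) (typeCount τ S') ∧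
      typeCount τ (S'.erase s' ∪ {s}) ∈ Set.uIcc (typeCount τ S') (typeCount τ S) := by
  by_cases hsame : ∃ s ∈ S \ S', ∃ s' ∈ S' \ S, τ s = τ s'
  · obtain ⟨s, hs, s', hs', hτ⟩ := hsame
    refine ⟨s, hs, s', hs', ?_⟩
    rw [mem_sdiff] at hs hs'
    rw [typeCount_exchange_of_eq hs.1 hs'.2 hτ, typeCount_exchange_of_eq hs'.1 hs.2 hτ.symm]
    exact ⟨Set.left_mem_uIcc, Set.left_mem_uIcc⟩
  · push Not at hsame
    obtain ⟨s, hs⟩ := sdiff_nonempty_of_card_le_of_ne hcard.ge hne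
    obtain ⟨s', hs'⟩ := sdiff_nonempty_of_card_le_of_ne hcard.le hne.symm
    refine ⟨s, hs, s', hs', ?_⟩
    have hno_s : ∀ x ∈ S' \ S, τ x ≠ τ s := fun x hx => (hsame s hs x hx).symm
    have hno_s' : ∀ x ∈ S \ S', τ x ≠ τ s' := fun x hx => hsame x hx s' hs'
    rw [mem_sdiff] at hs hs'
    have hlt := typeCount_lt_typeCount hs.1 hs.2 hno_s
    have hlt' := typeCount_lt_typeCount hs'.1 hs'.2 hno_s'
    exact ⟨typeCount_exchange_mem_uIcc_of_lt hs.1 hs'.2 hlt hlt',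
      typeCount_exchange_mem_uIcc_of_lt hs'.1 hs.2 hlt' hlt⟩

end TypeCount

section Preference

lemma mem_NW_of_card_eq {q : ℕ} {S T : Finset α} (hsub : T ⊆ S) (hcard : T.card = q) :
    T ∈ NW q S :=
  ⟨hsub, by rw [min_eq_left (hcard ▸ card_le_card hsub), hcard]⟩

lemma upperBoundProperty_of_total [DecidableEq α] (pref : Finset α → Finset α → Prop)
    [Std.Total pref] (q : ℕ) : upperBoundProperty pref q :=
  fun S S' _ _ hinc => absurd (Std.Total.total S S') (not_or.2 hinc)

variable {β : Type*} [DecidableEq β] {τ : α → β} {r p : β → ℕ} {A B C : Finset α}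

instance : Std.Total (dichotomousPref τ r p) where
  total A B := by
    unfold dichotomousPref
    tauto

lemma satisfiesBounds_of_typeCount_mem_uIcc (hA : satisfiesBounds τ r p A)
    (hB : satisfiesBounds τ r p B)
    (hC : typeCount τ C ∈ Set.uIcc (typeCount τ A) (typeCount τ B)) :
    satisfiesBounds τ r p C := by
  rw [satisfiesBounds_iff_typeCount_mem_Icc] at hA hB ⊢
  exact Set.uIcc_subset_Icc hA hB hC

lemma indiffPref_of_typeCount_mem_uIcc (hAC : dichotomousPref τ r p A C)
    (hBA : dichotomousPref τ r p B A)
    (hC : typeCount τ C ∈ Set.uIcc (typeCount τ A) (typeCount τ B)) :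
    indiffPref (dichotomousPref τ r p) C A := by
  refine ⟨?_, hAC⟩
  by_cases hA : satisfiesBounds τ r p A
  · have hB : satisfiesBounds τ r p B := hBA.resolve_right (not_not_intro hA)
    exact Or.inl (satisfiesBounds_of_typeCount_mem_uIcc hA hB hC)
  · exact Or.inr hA

variable [DecidableEq α]

lemma indiffPref_exchange_of_maximal {q : ℕ} {S S' : Finset α} {s s' : α}
    (hq : S.card = q) (hs : s ∈ S) (hs' : s' ∈ S' \ S)
    (hmax : ∀ T ∈ NW q (S ∪ S'), dichotomousPref τ r p S T ∧ dichotomousPref τ r p S' T)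
    (hbetween : typeCount τ (S.erase s ∪ {s'}) ∈ Set.uIcc (typeCount τ S) (typeCount τ S')) :
    indiffPref (dichotomousPref τ r p) (S.erase s ∪ {s'}) S := by
  rw [mem_sdiff] at hs'
  have hS : S ∈ NW q (S ∪ S') := mem_NW_of_card_eq subset_union_left hq
  have hexch : S.erase s ∪ {s'} ∈ NW q (S ∪ S') :=
    mem_NW_of_card_eq (exchange_subset_union hs'.1) ((card_exchange hs hs'.2).trans hq)
  exact indiffPref_of_typeCount_mem_uIcc (hmax _ hexch).1 (hmax S hS).2 hbetween

lemma maximizerProperty_dichotomousPref (τ : α → β) (r p : β → ℕ) (q : ℕ) :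
    maximizerProperty (dichotomousPref τ r p) q := by
  intro S S' hne hS hS' hmax
  obtain ⟨s, hs, s', hs', hbetween, hbetween'⟩ :=
    exists_exchange_typeCount_mem_uIcc τ hne (hS.trans hS'.symm)
  have hmax' : ∀ T ∈ NW q (S' ∪ S), dichotomousPref τ r p S' T ∧ dichotomousPref τ r p S T :=
    fun T hT => (hmax T (union_comm S' S ▸ hT)).symm
  exact ⟨s, hs, s', hs',
    indiffPref_exchange_of_maximal hS (sdiff_subset hs) hs' hmax hbetween,
    indiffPref_exchange_of_maximal hS' (sdiff_subset hs') hs hmax' hbetween'⟩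

end Preference

theorem stmt15_general {α β : Type*} [DecidableEq α] [DecidableEq β]
    (q : ℕ) (τ : α → β) (r p : β → ℕ) :
    upperBoundProperty (dichotomousPref τ r p) q ∧
    maximizerProperty (dichotomousPref τ r p) q :=
  ⟨upperBoundProperty_of_total _ q, maximizerProperty_dichotomousPref τ r p q⟩

/-- The dichotomous distributional preference satisfies the
upper-bound property and the maximizer property. -/
theorem stmt15 {α β : Type*} [Fintype α] [Nonempty α] [DecidableEq α]
    [Fintype β] [DecidableEq β]
    (q : ℕ) (hq : 0 < q) (τ : α → β) (r p : β → ℕ) (hrp : ∀ t : β, r t ≤ p t) :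
    upperBoundProperty (dichotomousPref τ r p) q ∧
    maximizerProperty (dichotomousPref τ r p) q :=
  stmt15_general q τ r p
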